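/- Let T = [[t₁, t₂/2],[t₂/2, t₃]] with t₁, t₂, t₃ ∈ ℤ and det(T) ≠ 0, and write T(x,y) = t₁x² + t₂xy + t₃y². Then for every ε > 0 there is a constant C(ε) such that for all X ≥ 1 and all nonzero integers n, the number of pairs (x,y) ∈ ℤ² with T(x,y) = n and |x| + |y| ≤ X is at most C(ε)·(|n|·X·‖T‖)^ε, where ‖T‖ = max(|t₁|,|t₂|,|t₃|). -/

import Mathlib

lemma pell_gap (D x y x' y' : ℤ) (hD : 0 < D) (hx : 0 < x) (hy : 0 ≤ y) (hx' : 0 < x') (hy' : 0 ≤ y')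
    (h : x^2 - D*y^2 = 4) (h' : x'^2 - D*y'^2 = 4) (hs : y = 0 → y' = 0) (hlt : x < x') : 2 * x ≤ x' := by
  have hyy : y < y' := by
    by_contra hc
    push Not at hc
    have : y'^2 ≤ y^2 := by nlinarith
    nlinarith
  have hy'0 : 0 < y' := by omega
  have hy0 : 0 < y := by
    rcases hy.lt_or_eq with h0 | h0
    · exact h0
    · have := hs h0.symm
      omega
  have hx3 : 3 ≤ x := by
    by_contra hc
    have : x ≤ 2 := by omega
    nlinarith [mul_pos hD (pow_pos hy0 2)]
  have e1 : Even (x * x' - D * y * y') ∧ Even (x*y' - x'*y) := by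
    have p1 : Even (x^2 - D*y^2) := by rw [h]; decide
    have p2 : Even (x'^2 - D*y'^2) := by rw [h']; decide
    simp only [Int.even_sub, Int.even_mul, Int.even_pow] at p1 p2 ⊢
    constructor <;> tauto
  obtain ⟨⟨A, hA⟩, ⟨B, hB⟩⟩ := e1
  have hAB : A^2 - D*B^2 = 4 := by
    have : (2*A)^2 - D*(2*B)^2 = (x^2 - D*y^2) * (x'^2 - D*y'^2) := by
      rw [two_mul, two_mul, ← hA, ← hB]; ring
    rw [h, h'] at this
    nlinarith
  have hBpos : 0 < B := by
    by_contra hc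
    have h1 : x*y' ≤ x'*y := by linarith
    have h2 : (x*y')^2 ≤ (x'*y)^2 := pow_le_pow_left₀ (by positivity) h1 2
    have h3 : (x*y')^2 - (x'*y)^2 = 4 * (y'^2 - y^2) := by
      linear_combination y'^2 * h - y^2 * h'
    nlinarith
  have hApos : 0 < A := by
    by_contra hc
    have h1 : x*x' ≤ D*y*y' := by linarith
    have h2 : (x*x')^2 ≤ (D*y*y')^2 := pow_le_pow_left₀ (by positivity) h1 2
    have h3 : (x*x')^2 = (4 + D*y^2) * (4 + D*y'^2) := by
      rw [mul_pow]; rw [show x^2 = 4 + D*y^2 by linarith, show x'^2 = 4 + D*y'^2 by linarith]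
    have : 0 < D*y^2 := by positivity
    have : 0 < D*y'^2 := by positivity
    nlinarith
  have hA3 : 3 ≤ A := by
    by_contra hc
    have : A ≤ 2 := by omega
    nlinarith [mul_pos hD (pow_pos hBpos 2)]
  have hDB : x ≤ D*B*y := by
    refine (pow_le_pow_iff_left₀ (by positivity) (by positivity) (two_ne_zero)).mp ?_
    have : (D*B*y)^2 = (A^2-4)*(x^2-4) := by
      rw [show A^2-4 = D*B^2 by linarith, show x^2-4 = D*y^2 by linarith]; ring
    rw [this]
    have q1 : 5 ≤ A^2 - 4 := by clear * - hA3; nlinarith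
    have q2 : 9 ≤ x^2 := by clear * - hx3; nlinarith
    have q3 : 5 * (x^2-4) ≤ (A^2-4)*(x^2-4) := mul_le_mul_of_nonneg_right q1 (by linarith)
    linarith
  have hfin : A*x + D*B*y = 2*x' := by
    have : (2*A)*x + D*(2*B)*y = x' * (x^2 - D*y^2) := by
      rw [two_mul, two_mul, ← hA, ← hB]; ring
    rw [h] at this; linarith
  have : 3 * x ≤ A * x := mul_le_mul_of_nonneg_right hA3 hx.le
  linarith

lemma log_gap {x y : ℕ} (hx : 0 < x) (h : 2 * x ≤ y) : Nat.log 2 x ≠ Nat.log 2 y := by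
  intro he
  have h1 := Nat.pow_log_le_self 2 hx.ne'
  have h2 := Nat.lt_pow_succ_log_self (b := 2) (by norm_num) y
  rw [← he, pow_succ] at h2
  omega

lemma pell_not_lt (D a b a' b' : ℤ) (hD : D ≠ 0)
    (h : a^2 - D*b^2 = 4) (h' : a'^2 - D*b'^2 = 4) (hsa : a.sign = a'.sign) (hsb : b.sign = b'.sign)
    (hl : Nat.log 2 a.natAbs = Nat.log 2 a'.natAbs) : ¬ (|a| < |a'|) := by
  intro hlt
  rcases lt_or_gt_of_ne hD with hD | hD
  · have ha' : |a'| ≤ 2 := by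
      apply abs_le_of_sq_le_sq' _ (by norm_num) |> abs_le.mpr
      nlinarith [mul_nonneg (neg_nonneg.mpr hD.le) (sq_nonneg b')]
    have hc : |a'| = 2 ∨ (|a'| = 1 ∧ |a| = 0) := by
      have := abs_nonneg a
      omega
    rcases hc with hc | ⟨hc, hc2⟩
    · have h2 : a'^2 = 4 := by rw [← sq_abs, hc]; norm_num
      have hb' : b' = 0 := by
        have : D * b'^2 = 0 := by linarith
        simpa [hD.ne] using this
      rw [hb'] at hsb
      have hb : b = 0 := by simpa using hsb
      rw [hb] at h
      have : |a|^2 < |a'|^2 := pow_lt_pow_left₀ hlt (abs_nonneg _) (by norm_num)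
      rw [sq_abs, sq_abs] at this
      linarith
    · have : a = 0 := by simpa using hc2
      rw [this] at hsa
      have : a' = 0 := by simpa using hsa.symm
      simp [this] at hc
  · have hpos : ∀ c d : ℤ, c^2 - D*d^2 = 4 → 0 < |c| := by
      intro c d hcd
      rw [abs_pos]
      rintro rfl
      nlinarith [mul_nonneg hD.le (sq_nonneg d)]
    have := pell_gap D |a| |b| |a'| |b'| hD (hpos _ _ h) (abs_nonneg _) (hpos _ _ h') (abs_nonneg _)
      (by simpa using h) (by simpa using h') (by intro h0; rw [abs_eq_zero] at h0 ⊢; rw [h0] at hsb; simpa using hsb.symm) hlt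
    have q1 := hpos _ _ h
    rw [Int.abs_eq_natAbs] at q1
    rw [Int.abs_eq_natAbs, Int.abs_eq_natAbs] at this
    exact log_gap (x := a.natAbs) (y := a'.natAbs) (by omega) (by omega) hl

lemma eq_of_sq_sign {a b : ℤ} (h : |a| = |b|) (hs : a.sign = b.sign) : a = b := by
  rw [← Int.sign_mul_abs a, ← Int.sign_mul_abs b, h, hs]

lemma pell_card (D : ℤ) (hD : D ≠ 0) (A : ℕ) (s : Finset (ℤ × ℤ))
    (hs : ∀ p ∈ s, p.1^2 - D*p.2^2 = 4 ∧ p.1.natAbs ≤ A) : s.card ≤ 9 * (Nat.log 2 A + 1) := by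
  have : s.card ≤ (((({-1,0,1} : Finset ℤ) ×ˢ ({-1,0,1} : Finset ℤ)) ×ˢ Finset.range (Nat.log 2 A + 1))).card := by
    apply Finset.card_le_card_of_injOn (fun p => ((p.1.sign, p.2.sign), Nat.log 2 p.1.natAbs))
    · intro p hp
      have := (hs p hp).2
      have h3 : ∀ z : ℤ, z.sign ∈ ({-1,0,1} : Finset ℤ) := by
        intro z
        rcases lt_trichotomy z 0 with h | h | h
        · simp [Int.sign_eq_neg_one_of_neg h]
        · simp [h]
        · simp [Int.sign_eq_one_of_pos h]
      simp only [Finset.coe_product, Set.mem_prod, Finset.mem_coe]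
      exact ⟨⟨h3 _, h3 _⟩, Finset.mem_range.mpr (Nat.lt_succ_of_le (Nat.log_mono_right this))⟩
    · rintro ⟨a, b⟩ hp ⟨a', b'⟩ hq heq
      simp only [Prod.mk.injEq] at heq
      obtain ⟨⟨h1, h2⟩, h3⟩ := heq
      have hp := (hs _ hp).1
      have hq := (hs _ hq).1
      have n1 := pell_not_lt D a b a' b' hD hp hq h1 h2 h3
      have n2 := pell_not_lt D a' b' a b hD hq hp h1.symm h2.symm h3.symm
      have ha : a = a' := eq_of_sq_sign (by omega) h1
      subst ha
      have : D * b^2 = D*b'^2 := by simp only at hp hq; linarith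
      have := mul_left_cancel₀ hD this
      rw [eq_of_sq_sign ((sq_eq_sq_iff_abs_eq_abs _ _).mp this) h2]
  simpa [Finset.card_product] using this

lemma sqfree_dvd_two (D e : ℤ) (hD : Squarefree D) (h : e^2 ∣ 4*D) : e ∣ 2 := by
  rcases Int.even_or_odd' e with ⟨k, rfl | rfl⟩
  · have : k * k ∣ D := by
      have : 4 * (k*k) ∣ 4 * D := by convert h using 1; ring
      exact (mul_dvd_mul_iff_left (by norm_num)).mp this
    have := hD k this
    exact (mul_dvd_mul_left 2 this.dvd : 2 * k ∣ 2 * 1)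
  · have hc : IsCoprime ((2*k+1)^2) (4:ℤ) := by
      rw [show (4:ℤ) = 2^2 by norm_num]
      exact IsCoprime.pow ⟨1, -k, by ring⟩
    have h2 := hc.dvd_of_dvd_mul_left h
    rw [sq] at h2
    exact (hD _ h2).dvd

lemma coprime_norm (D m u v : ℤ) (hc : IsCoprime u v) (h : u^2 - D*v^2 = m) : IsCoprime v m := by
  have : IsCoprime v (u^2) := (hc.symm).pow_right
  rw [← h, show u^2 - D*v^2 = u^2 + v * (-D*v) by ring]
  exact IsCoprime.add_mul_left_right this _

lemma class_dvd (D m d u v u0 v0 u' v' : ℤ) (hD : Squarefree D) (hm : m ≠ 0)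
    (hc : IsCoprime u v) (h : u^2 - D*v^2 = m)
    (hc0 : IsCoprime u0 v0) (h0 : u0^2 - D*v0^2 = m)
    (h' : u'^2 - D*v'^2 = m)
    (hd : (Int.gcd (u*v0-u0*v) m : ℤ) = d) (hd' : (Int.gcd (u'*v0-u0*v') m : ℤ) = d) :
    m ∣ 2*(u*v'-u'*v) ∧ m ∣ 2*(u*u' - D*v*v') := by
  have cv0 := coprime_norm D m u0 v0 hc0 h0
  have cv := coprime_norm D m u v hc h
  have dm : d ∣ m := hd ▸ Int.gcd_dvd_right _ _
  have dz : d ≠ 0 := by rintro rfl; exact hm (zero_dvd_iff.mp dm)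
  obtain ⟨k, hk⟩ := dm
  have aux : ∀ a b : ℤ, a^2 - D*b^2 = m → (Int.gcd (a*v0-u0*b) m : ℤ) = d →
      d ∣ a*v0-u0*b ∧ k ∣ a*v0+u0*b := by
    intro a b hab hg
    have d1 : d ∣ a*v0-u0*b := hg ▸ Int.gcd_dvd_left _ _
    refine ⟨d1, ?_⟩
    obtain ⟨x, y, hxy⟩ : ∃ x y : ℤ, d = (a*v0-u0*b)*x + m*y := ⟨_, _, hg ▸ Int.gcd_eq_gcd_ab _ _⟩
    have : d * k ∣ d * (a*v0+u0*b) := by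
      have e : d * (a*v0+u0*b) = m * ((v0^2-b^2)*x + y*(a*v0+u0*b)) := by
        rw [hxy]
        linear_combination x * v0^2 * hab - x*b^2 * h0
      rw [e, ← hk]
      exact dvd_mul_right _ _
    exact (mul_dvd_mul_iff_left dz).mp this
  obtain ⟨a1, a2⟩ := aux u v h hd
  obtain ⟨b1, b2⟩ := aux u' v' h' hd'
  have cd : IsCoprime d v0 := (cv0.of_isCoprime_of_dvd_right ⟨k, hk⟩).symm
  have ck : IsCoprime k v0 := (cv0.of_isCoprime_of_dvd_right ⟨d, by rw [hk, mul_comm]⟩).symm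
  have dW : d ∣ u*v'-u'*v := by
    apply cd.dvd_of_dvd_mul_left
    rw [show v0*(u*v'-u'*v) = (u*v0-u0*v)*v' - (u'*v0-u0*v')*v by ring]
    exact dvd_sub (a1.mul_right _) (b1.mul_right _)
  have kW : k ∣ u*v'-u'*v := by
    apply ck.dvd_of_dvd_mul_left
    rw [show v0*(u*v'-u'*v) = (u*v0+u0*v)*v' - (u'*v0+u0*v')*v by ring]
    exact dvd_sub (a2.mul_right _) (b2.mul_right _)
  set e : ℤ := (Int.gcd d k : ℤ) with he
  have ed : e ∣ d := Int.gcd_dvd_left _ _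
  have ek : e ∣ k := Int.gcd_dvd_right _ _
  have em : e^2 ∣ m := by rw [hk, sq]; exact mul_dvd_mul ed ek
  have e2u : e ∣ 2*u := by
    have : IsCoprime e v0 := cd.of_isCoprime_of_dvd_left ed
    apply this.dvd_of_dvd_mul_left
    rw [show v0*(2*u) = (u*v0-u0*v) + (u*v0+u0*v) by ring]
    exact dvd_add (ed.trans a1) (ek.trans a2)
  have e2 : e ∣ 2 := by
    apply sqfree_dvd_two D e hD
    have ce : IsCoprime (e^2) (v^2) :=
      (cv.of_isCoprime_of_dvd_right (ed.trans ⟨k, hk⟩)).symm.pow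
    apply ce.dvd_of_dvd_mul_left
    rw [show v^2*(4*D) = (2*u)^2 - m*4 by rw [← h]; ring]
    exact dvd_sub (pow_dvd_pow_of_dvd e2u 2) (em.mul_right _)
  have W : m ∣ 2*(u*v'-u'*v) := by
    obtain ⟨q, hq⟩ := e2
    have hb : e = d * Int.gcdA d k + k * Int.gcdB d k := Int.gcd_eq_gcd_ab _ _
    rw [hb] at hq
    obtain ⟨w1, hw1⟩ := dW
    obtain ⟨w2, hw2⟩ := kW
    refine ⟨q * (Int.gcdA d k * w2 + Int.gcdB d k * w1), ?_⟩
    rw [hk]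
    linear_combination (u*v'-u'*v) * hq + d * Int.gcdA d k * q * hw2 + k * Int.gcdB d k * q * hw1
  refine ⟨W, ?_⟩
  apply cv.symm.dvd_of_dvd_mul_left
  rw [show v*(2*(u*u'-D*v*v')) = m*(2*v') - (2*(u*v'-u'*v))*u by rw [← h]; ring]
  exact dvd_sub (dvd_mul_right _ _) (W.mul_right _)

/-- fibre bound -/
lemma fibre_card (D m d u0 v0 : ℤ) (B A : ℕ) (hD : Squarefree D) (hm : m ≠ 0)
    (hc0 : IsCoprime u0 v0) (h0 : u0^2 - D*v0^2 = m) (hA : 2 * (1 + D.natAbs) * B^2 ≤ A)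
    (s : Finset (ℤ × ℤ)) (hs : ∀ p ∈ s, IsCoprime p.1 p.2 ∧ p.1^2 - D*p.2^2 = m ∧
      p.1.natAbs ≤ B ∧ p.2.natAbs ≤ B ∧ (Int.gcd (p.1*v0-u0*p.2) m : ℤ) = d) :
    s.card ≤ 9 * (Nat.log 2 A + 1) := by
  rcases s.eq_empty_or_nonempty with rfl | ⟨⟨u', v'⟩, hp'⟩
  · simp
  obtain ⟨c', h', bu', bv', g'⟩ := hs _ hp'
  simp only at c' h' bu' bv' g'
  set F : ℤ × ℤ → ℤ × ℤ := fun p => (2*(p.1*u' - D*p.2*v')/m, 2*(p.1*v'-u'*p.2)/m) with hF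
  have hFm : ∀ p ∈ s, m * (F p).1 = 2*(p.1*u' - D*p.2*v') ∧ m * (F p).2 = 2*(p.1*v'-u'*p.2) := by
    intro p hp
    obtain ⟨c, h, bu, bv, g⟩ := hs _ hp
    obtain ⟨r1, r2⟩ := class_dvd D m d p.1 p.2 u0 v0 u' v' hD hm c h hc0 h0 h' g g'
    exact ⟨Int.mul_ediv_cancel' r2, Int.mul_ediv_cancel' r1⟩
  have hinj : Set.InjOn F s := by
    intro p hp q hq hpq
    obtain ⟨p1, p2⟩ := hFm p hp
    obtain ⟨q1, q2⟩ := hFm q hq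
    rw [hpq] at p1 p2
    have e1 : p.1*u' - D*p.2*v' = q.1*u' - D*q.2*v' := by linarith
    have e2 : p.1*v' - u'*p.2 = q.1*v' - u'*q.2 := by linarith
    have f1 : m * p.1 = m * q.1 := by
      rw [← h']; linear_combination u' * e1 - D*v'*e2
    have f2 : m * p.2 = m * q.2 := by
      rw [← h']; linear_combination v' * e1 - u'*e2
    exact Prod.ext (mul_left_cancel₀ hm f1) (mul_left_cancel₀ hm f2)
  rw [← Finset.card_image_of_injOn hinj]
  apply pell_card D hD.ne_zero
  intro q hq
  obtain ⟨p, hp, rfl⟩ := Finset.mem_image.mp hq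
  obtain ⟨p1, p2⟩ := hFm p hp
  obtain ⟨c, h, bu, bv, g⟩ := hs _ hp
  constructor
  · have : m^2 * ((F p).1^2 - D*(F p).2^2) = m^2 * 4 := by
      have : m^2 * ((F p).1^2 - D*(F p).2^2) = (m * (F p).1)^2 - D*(m*(F p).2)^2 := by ring
      rw [this, p1, p2]
      calc _ = 4 * ((p.1^2 - D*p.2^2) * (u'^2 - D*v'^2)) := by ring
        _ = _ := by rw [h, h']; ring
    exact mul_left_cancel₀ (pow_ne_zero 2 hm) this
  · refine le_trans ?_ hA
    have k1 : (F p).1.natAbs ≤ (m * (F p).1).natAbs := by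
      rw [Int.natAbs_mul]
      exact Nat.le_mul_of_pos_left _ (Int.natAbs_pos.mpr hm)
    refine k1.trans ?_
    rw [p1, Int.natAbs_mul]
    have k2 := Int.natAbs_sub_le (p.1*u') (D*p.2*v')
    rw [Int.natAbs_mul, Int.natAbs_mul, Int.natAbs_mul] at k2
    have k3 : p.1.natAbs * u'.natAbs ≤ B*B := Nat.mul_le_mul bu bu'
    have k4 : D.natAbs * p.2.natAbs * v'.natAbs ≤ D.natAbs * B * B := by gcongr
    have : (2:ℤ).natAbs = 2 := rfl
    rw [this]
    nlinarith

lemma prim_card (D m : ℤ) (B A : ℕ) (hD : Squarefree D) (hm : m ≠ 0)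
    (hA : 2 * (1 + D.natAbs) * B^2 ≤ A)
    (s : Finset (ℤ × ℤ)) (hs : ∀ p ∈ s, IsCoprime p.1 p.2 ∧ p.1^2 - D*p.2^2 = m ∧
      p.1.natAbs ≤ B ∧ p.2.natAbs ≤ B) :
    s.card ≤ 9 * (Nat.log 2 A + 1) * m.natAbs.divisors.card := by
  rcases s.eq_empty_or_nonempty with rfl | ⟨⟨u0, v0⟩, hp0⟩
  · simp
  obtain ⟨c0, h0, -, -⟩ := hs _ hp0
  apply Finset.card_le_mul_card_image_of_maps_to (f := fun p : ℤ × ℤ => Int.gcd (p.1*v0-u0*p.2) m)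
  · intro p hp
    rw [Nat.mem_divisors]
    exact ⟨Int.natCast_dvd.mp (Int.gcd_dvd_right _ _), Int.natAbs_ne_zero.mpr hm⟩
  · intro d hd
    apply fibre_card D m d u0 v0 B A hD hm c0 h0 hA
    intro p hp
    rw [Finset.mem_filter] at hp
    obtain ⟨a1, a2, a3, a4⟩ := hs p hp.1
    exact ⟨a1, a2, a3, a4, by exact_mod_cast hp.2⟩

lemma all_card (D m : ℤ) (B A : ℕ) (hD : Squarefree D) (hm : m ≠ 0)
    (hA : 2 * (1 + D.natAbs) * B^2 ≤ A)
    (s : Finset (ℤ × ℤ)) (hs : ∀ p ∈ s, p.1^2 - D*p.2^2 = m ∧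
      p.1.natAbs ≤ B ∧ p.2.natAbs ≤ B) :
    s.card ≤ 9 * (Nat.log 2 A + 1) * m.natAbs.divisors.card * m.natAbs.divisors.card := by
  have hg : ∀ p ∈ s, ((Int.gcd p.1 p.2 : ℤ)^2 ∣ m) := by
    intro p hp
    rw [← (hs p hp).1]
    exact dvd_sub (pow_dvd_pow_of_dvd (Int.gcd_dvd_left _ _) 2)
      ((pow_dvd_pow_of_dvd (Int.gcd_dvd_right _ _) 2).mul_left _)
  apply Finset.card_le_mul_card_image_of_maps_to (f := fun p : ℤ × ℤ => Int.gcd p.1 p.2)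
  · intro p hp
    rw [Nat.mem_divisors]
    exact ⟨Int.natCast_dvd.mp ((dvd_pow_self _ two_ne_zero).trans (hg p hp)), Int.natAbs_ne_zero.mpr hm⟩
  · intro g hgg
    set t := s.filter (fun p : ℤ × ℤ => Int.gcd p.1 p.2 = g) with ht
    rcases t.eq_empty_or_nonempty with h | ⟨p0, hp0⟩
    · simp [h]
    have hp0' := Finset.mem_filter.mp hp0
    have hgm : (g:ℤ)^2 ∣ m := by have := hg _ hp0'.1; rwa [hp0'.2] at this
    obtain ⟨m', hm'⟩ := hgm
    have hm'0 : m' ≠ 0 := by rintro rfl; simp at hm'; exact hm hm'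
    have hg0 : (g:ℤ) ≠ 0 := by intro h; rw [h] at hm'; simp at hm'; exact hm hm'
    have hgpos : 0 < g := by omega
    have key : ∀ p ∈ t, p.1 = g * (p.1 / g) ∧ p.2 = g * (p.2/g) := by
      intro p hp
      have := (Finset.mem_filter.mp hp).2
      exact ⟨(Int.mul_ediv_cancel' (this ▸ Int.gcd_dvd_left _ _)).symm,
        (Int.mul_ediv_cancel' (this ▸ Int.gcd_dvd_right _ _)).symm⟩
    have hinj : Set.InjOn (fun p : ℤ × ℤ => (p.1/(g:ℤ), p.2/(g:ℤ))) t := by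
      intro p hp q hq hpq
      simp only [Prod.mk.injEq] at hpq
      refine Prod.ext ?_ ?_
      · rw [(key p hp).1, (key q hq).1, hpq.1]
      · rw [(key p hp).2, (key q hq).2, hpq.2]
    rw [← Finset.card_image_of_injOn hinj]
    refine (prim_card D m' B A hD hm'0 hA _ ?_).trans ?_
    · intro q hq
      obtain ⟨p, hp, rfl⟩ := Finset.mem_image.mp hq
      obtain ⟨k1, k2⟩ := key p hp
      have hp' := Finset.mem_filter.mp hp
      obtain ⟨a1, a2, a3⟩ := hs p hp'.1
      simp only
      set a := p.1/(g:ℤ)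
      set b := p.2/(g:ℤ)
      refine ⟨?_, ?_, ?_, ?_⟩
      · have := hp'.2
        rw [k1, k2, Int.gcd_mul_left, Int.natAbs_natCast] at this
        rw [Int.isCoprime_iff_gcd_eq_one]
        exact Nat.eq_of_mul_eq_mul_left hgpos (by simpa using this)
      · apply mul_left_cancel₀ (pow_ne_zero 2 hg0)
        rw [← hm', ← a1]
        conv_rhs => rw [k1, k2]
        ring
      · rw [k1, Int.natAbs_mul, Int.natAbs_natCast] at a2
        exact (Nat.le_mul_of_pos_left _ hgpos).trans a2
      · rw [k2, Int.natAbs_mul, Int.natAbs_natCast] at a3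
        exact (Nat.le_mul_of_pos_left _ hgpos).trans a3
    · refine Nat.mul_le_mul_left _ ?_
      refine Finset.card_le_card (Nat.divisors_subset_of_dvd (Int.natAbs_ne_zero.mpr hm) ?_)
      exact Int.natAbs_dvd_natAbs.mpr ⟨(g:ℤ)^2, by rw [hm', mul_comm]⟩

lemma form_card (t₁ t₂ t₃ n : ℤ) (N K A : ℕ) (hT : 4*t₁*t₃ - t₂^2 ≠ 0) (h1 : t₁ ≠ 0) (hn : n ≠ 0)
    (n1 : t₁.natAbs ≤ N) (n2 : t₂.natAbs ≤ N) (n3 : t₃.natAbs ≤ N) (hA : 108 * N^4 * K^2 ≤ A)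
    (s : Finset (ℤ × ℤ)) (hs : ∀ p ∈ s, t₁*p.1^2 + t₂*p.1*p.2 + t₃*p.2^2 = n ∧
      p.1.natAbs + p.2.natAbs ≤ K) :
    s.card ≤ 9 * (Nat.log 2 A + 1) * (4*t₁*n).natAbs.divisors.card * (4*t₁*n).natAbs.divisors.card := by
  obtain ⟨a, f, haf, hsq⟩ := Nat.sq_mul_squarefree (t₂^2-4*t₁*t₃).natAbs
  have hDD : (t₂^2-4*t₁*t₃) ≠ 0 := by intro h; apply hT; linarith
  have hN : 1 ≤ N := by omega
  obtain ⟨D, hDa, hD⟩ : ∃ D : ℤ, D.natAbs = a ∧ t₂^2-4*t₁*t₃ = f^2 * D := by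
    rcases Int.natAbs_eq (t₂^2-4*t₁*t₃) with h | h
    · exact ⟨a, by simp, by rw [h, ← haf]; push_cast; ring⟩
    · exact ⟨-a, by simp, by rw [h, ← haf]; push_cast; ring⟩
  have hDs : Squarefree D := by rwa [← Int.squarefree_natAbs, hDa]
  have hf0 : (f:ℤ) ≠ 0 := by intro h; rw [h] at hD; simp at hD; exact hDD hD
  have hbound : (t₂^2-4*t₁*t₃).natAbs ≤ 5 * N^2 := by
    have k := Int.natAbs_sub_le (t₂^2) (4*t₁*t₃)
    rw [Int.natAbs_pow, Int.natAbs_mul, Int.natAbs_mul] at k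
    have : (4:ℤ).natAbs = 4 := rfl
    rw [this] at k
    have k1 : t₂.natAbs^2 ≤ N^2 := by gcongr
    have k2 : t₁.natAbs * t₃.natAbs ≤ N*N := by gcongr
    nlinarith
  have hfpos : 1 ≤ f := by omega
  have hapos : 1 ≤ a := Nat.one_le_iff_ne_zero.mpr hsq.ne_zero
  have ha5 : a ≤ 5 * N^2 := by
    rw [← haf] at hbound
    exact (Nat.le_mul_of_pos_left _ (by positivity)).trans hbound
  have hf3 : f ≤ 3 * N := by
    have : f^2 ≤ 5*N^2 := by
      rw [← haf] at hbound
      exact (Nat.le_mul_of_pos_right _ hapos).trans hbound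
    by_contra hc
    push Not at hc
    nlinarith
  have hinj : Set.InjOn (fun p : ℤ × ℤ => (2*t₁*p.1 + t₂*p.2, (f:ℤ)*p.2)) s := by
    intro p hp q hq hpq
    simp only [Prod.mk.injEq] at hpq
    have e2 := mul_left_cancel₀ hf0 hpq.2
    have e1 := hpq.1
    rw [e2] at e1
    have e3 : (2*t₁) * p.1 = (2*t₁)*q.1 := by linarith
    exact Prod.ext (mul_left_cancel₀ (by simpa using h1) e3) e2
  rw [← Finset.card_image_of_injOn hinj]
  apply all_card D (4*t₁*n) (3*N*K) A hDs (by simp [h1, hn])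
  · rw [hDa]
    refine le_trans ?_ hA
    have : 1 + a ≤ 6 * N^2 := by nlinarith
    calc 2 * (1+a) * (3*N*K)^2 ≤ 2 * (6*N^2) * (3*N*K)^2 := by gcongr
      _ = _ := by ring
  · intro q hq
    obtain ⟨p, hp, rfl⟩ := Finset.mem_image.mp hq
    obtain ⟨e, b⟩ := hs p hp
    refine ⟨?_, ?_, ?_⟩
    · simp only
      rw [← e]
      linear_combination p.2^2 * hD
    · simp only
      have k := Int.natAbs_add_le (2*t₁*p.1) (t₂*p.2)
      rw [Int.natAbs_mul, Int.natAbs_mul, Int.natAbs_mul] at k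
      have : (2:ℤ).natAbs = 2 := rfl
      rw [this] at k
      have k1 : t₁.natAbs * p.1.natAbs ≤ N * p.1.natAbs := by gcongr
      have k2 : t₂.natAbs * p.2.natAbs ≤ N * p.2.natAbs := by gcongr
      have k3 : N * (p.1.natAbs + p.2.natAbs) ≤ N * K := by gcongr
      have k4 : 0 ≤ N * p.2.natAbs := Nat.zero_le _
      have k5 : 0 ≤ N * K := Nat.zero_le _
      rw [mul_assoc 2 t₁.natAbs] at k
      rw [mul_add] at k3
      rw [mul_assoc 3]
      omega
    · simp only
      rw [Int.natAbs_mul, Int.natAbs_natCast]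
      have : p.2.natAbs ≤ K := by omega
      exact Nat.mul_le_mul hf3 this

lemma form_card_zero (t₂ t₃ n : ℤ) (h2 : t₂ ≠ 0) (hn : n ≠ 0)
    (s : Finset (ℤ × ℤ)) (hs : ∀ p ∈ s, t₂*p.1*p.2 + t₃*p.2^2 = n) :
    s.card ≤ 2 * n.natAbs.divisors.card := by
  have hy : ∀ p ∈ s, p.2 ∣ n := by
    intro p hp
    exact ⟨t₂*p.1 + t₃*p.2, by rw [← hs p hp]; ring⟩
  have hinj : Set.InjOn (fun p : ℤ × ℤ => p.2) s := by
    intro p hp q hq hpq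
    simp only at hpq
    have a := hs p hp
    have b := hs q hq
    have h0 : q.2 ≠ 0 := by
      intro h; have := hy q hq; rw [h, zero_dvd_iff] at this; exact hn this
    rw [hpq] at a
    have : (t₂ * q.2) * p.1 = (t₂*q.2) * q.1 := by linarith
    exact Prod.ext (mul_left_cancel₀ (mul_ne_zero h2 h0) this) hpq
  rw [← Finset.card_image_of_injOn hinj]
  apply Finset.card_le_mul_card_image_of_maps_to (f := fun y : ℤ => y.natAbs)
  · intro y hyy
    obtain ⟨p, hp, rfl⟩ := Finset.mem_image.mp hyy
    rw [Nat.mem_divisors]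
    exact ⟨Int.natAbs_dvd_natAbs.mpr (hy p hp), Int.natAbs_ne_zero.mpr hn⟩
  · intro d hd
    calc _ ≤ ({(d:ℤ), -(d:ℤ)} : Finset ℤ).card := by
          apply Finset.card_le_card
          intro y hyy
          have := (Finset.mem_filter.mp hyy).2
          simp only [Finset.mem_insert, Finset.mem_singleton]
          omega
      _ ≤ 2 := Finset.card_le_two
lemma divisor_bound (ε : ℝ) (hε : 0 < ε) : ∃ C : ℝ, 0 < C ∧ ∀ n : ℕ, n ≠ 0 → (n.divisors.card : ℝ) ≤ C * (n:ℝ)^ε := by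
  have hl2 : 0 < Real.log 2 := Real.log_pos (by norm_num)
  set c : ℝ := 1 + 1 / (ε * Real.log 2) with hc
  have hc1 : 1 ≤ c := by
    have : 0 < 1 / (ε * Real.log 2) := by positivity
    linarith
  obtain ⟨P, hP⟩ := exists_nat_ge ((2:ℝ)^(1/ε))
  refine ⟨c^P, by positivity, ?_⟩
  intro n hn
  rw [Nat.card_divisors hn]
  have key : ∀ p ∈ n.primeFactors, ((n.factorization p + 1 : ℕ) : ℝ) ≤ (if p < P then c else 1) * ((p:ℝ)^(n.factorization p))^ε := by
    intro p hp
    have hp2 : (2:ℝ) ≤ p := by exact_mod_cast (Nat.prime_of_mem_primeFactors hp).two_le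
    set k := n.factorization p
    rw [← Real.rpow_natCast, ← Real.rpow_mul (by positivity), mul_comm (k:ℝ) ε]
    split_ifs with h
    · have h1 : (2:ℝ)^(ε * k) ≤ (p:ℝ)^(ε*k) := Real.rpow_le_rpow (by norm_num) hp2 (by positivity)
      have h2 : 1 + ε * Real.log 2 * k ≤ (2:ℝ)^(ε*k) := by
        rw [Real.rpow_def_of_pos (by norm_num)]
        have := Real.add_one_le_exp (Real.log 2 * (ε*k))
        linarith
      calc ((k+1 : ℕ):ℝ) ≤ c * (1 + ε * Real.log 2 * k) := by
            have h3 : c * (ε * Real.log 2) = ε * Real.log 2 + 1 := by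
              rw [hc]; field_simp
            have h4 : c * (1 + ε * Real.log 2 * k) = c + (ε * Real.log 2 + 1) * k := by
              rw [← h3]; ring
            rw [h4]; push_cast
            have : 0 ≤ ε * Real.log 2 * k := by positivity
            linarith
        _ ≤ _ := by gcongr; exact h2.trans h1
    · rw [one_mul, Real.rpow_mul (by positivity), Real.rpow_natCast]
      have h1 : (2:ℝ) ≤ (p:ℝ)^ε := by
        have : (2:ℝ)^(1/ε) ≤ p := hP.trans (by exact_mod_cast not_lt.mp h)
        have := Real.rpow_le_rpow (by positivity) this hε.le
        rwa [← Real.rpow_mul (by norm_num), one_div_mul_cancel hε.ne', Real.rpow_one] at this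
      calc ((k+1:ℕ):ℝ) ≤ (2:ℝ)^k := by exact_mod_cast Nat.lt_two_pow_self
        _ ≤ _ := by gcongr
  have h1 : ((∏ p ∈ n.primeFactors, (n.factorization p + 1) : ℕ) : ℝ) ≤ 
     ∏ p ∈ n.primeFactors, ((if p < P then c else 1) * ((p:ℝ)^(n.factorization p))^ε) := by
    rw [Nat.cast_prod]
    exact Finset.prod_le_prod (fun _ _ => by positivity) key
  refine h1.trans ?_
  rw [Finset.prod_mul_distrib, Real.finsetProd_rpow _ _ (fun _ _ => by positivity)]
  have h2 : ∏ p ∈ n.primeFactors, (p:ℝ)^(n.factorization p) = n := by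
    have := Nat.prod_factorization_pow_eq_self hn
    rw [Finsupp.prod, Nat.support_factorization] at this
    exact_mod_cast this
  rw [h2]
  gcongr
  rw [← Finset.prod_filter, Finset.prod_const]
  apply pow_le_pow_right₀ hc1
  calc _ ≤ (Finset.range P).card := by
        apply Finset.card_le_card
        intro p hp
        simp at hp ⊢
        exact hp.2
    _ = P := by simp

lemma log_bound (δ : ℝ) (hδ : 0 < δ) (A : ℕ) (Q : ℝ) (hQ : 1 ≤ Q) (hA : (A:ℝ) ≤ 108 * Q^4) :
    ((Nat.log 2 A + 1 : ℕ) : ℝ) ≤ (2 * 108^δ / δ + 1) * Q^(4*δ) := by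
  have hl2 := Real.log_two_gt_d9
  have h1 : (Nat.log 2 A : ℝ) ≤ 2 * ((A:ℝ)^δ / δ) := by
    rcases Nat.eq_zero_or_pos A with rfl | hpos
    · simp; positivity
    have h2 : ((2^(Nat.log 2 A) : ℕ) : ℝ) ≤ A := by exact_mod_cast Nat.pow_log_le_self 2 hpos.ne'
    have h3 := Real.log_le_log (by positivity) h2
    push_cast at h3
    rw [Real.log_pow] at h3
    have h4 := Real.log_natCast_le_rpow_div A hδ
    have h5 : (0:ℝ) ≤ Nat.log 2 A := by positivity
    nlinarith
  have h2 : (A:ℝ)^δ ≤ 108^δ * Q^(4*δ) := by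
    calc (A:ℝ)^δ ≤ (108 * Q^4)^δ := Real.rpow_le_rpow (by positivity) hA hδ.le
      _ = _ := by
        rw [Real.mul_rpow (by norm_num) (by positivity), Real.rpow_mul (by positivity)]
        congr 2
        exact_mod_cast (Real.rpow_natCast Q 4).symm
  have h3 : 1 ≤ Q^(4*δ) := Real.one_le_rpow hQ (by positivity)
  push_cast
  calc (Nat.log 2 A : ℝ) + 1 ≤ 2 * ((108^δ * Q^(4*δ)) / δ) + Q^(4*δ) := by
        refine add_le_add (h1.trans ?_) h3
        gcongr
    _ = _ := by ring

theorem stmt6 : ∀ ε : ℝ, 0 < ε → ∃ Cst : ℝ, 0 < Cst ∧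
    ∀ t₁ t₂ t₃ : ℤ, 4 * t₁ * t₃ - t₂ ^ 2 ≠ 0 →
    ∀ X : ℝ, 1 ≤ X → ∀ n : ℤ, n ≠ 0 →
      (Set.ncard {xy : ℤ × ℤ |
          t₁ * xy.1 ^ 2 + t₂ * xy.1 * xy.2 + t₃ * xy.2 ^ 2 = n ∧
          ((|xy.1| + |xy.2| : ℤ) : ℝ) ≤ X} : ℝ) ≤
        Cst * (((|n| : ℤ) : ℝ) * X *
          (max (|(t₁ : ℝ)|) (max (|(t₂ : ℝ)|) (|(t₃ : ℝ)|)))) ^ ε := by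
  intro ε hε
  set δ := ε / 6 with hδ
  have hδ0 : 0 < δ := by positivity
  obtain ⟨C, hC, hdiv⟩ := divisor_bound δ hδ0
  refine ⟨9 * (2 * 108^δ / δ + 1) * (C * 4^δ) * (C * 4^δ) + 2 * C, by positivity, ?_⟩
  intro t₁ t₂ t₃ hT X hX n hn
  set N : ℕ := max t₁.natAbs (max t₂.natAbs t₃.natAbs) with hN
  have hNr : max (|(t₁ : ℝ)|) (max (|(t₂ : ℝ)|) (|(t₃ : ℝ)|)) = (N:ℝ) := by
    have : ∀ z : ℤ, |(z:ℝ)| = (z.natAbs : ℝ) := fun z => by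
      rw [Nat.cast_natAbs, Int.cast_abs]
    rw [this, this, this, hN]
    push_cast
    rfl
  rw [hNr]
  have n1 : t₁.natAbs ≤ N := le_max_left _ _
  have n2 : t₂.natAbs ≤ N := (le_max_left _ _).trans (le_max_right _ _)
  have n3 : t₃.natAbs ≤ N := (le_max_right _ _).trans (le_max_right _ _)
  have hN1 : 1 ≤ N := by
    by_contra hc
    have a1 : t₁ = 0 := by omega
    have a2 : t₂ = 0 := by omega
    simp [a1, a2] at hT
  have hnr : ((|n| : ℤ) : ℝ) = (n.natAbs : ℝ) := by
    rw [Int.abs_eq_natAbs]; simp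
  rw [hnr]
  have hn1 : (1:ℝ) ≤ n.natAbs := by exact_mod_cast Int.natAbs_pos.mpr hn
  have hN1r : (1:ℝ) ≤ N := by exact_mod_cast hN1
  set Q : ℝ := (n.natAbs : ℝ) * X * N with hQ
  have hnN : (n.natAbs : ℝ) * N ≤ Q := by
    rw [hQ]
    have : (n.natAbs : ℝ) * N * 1 ≤ (n.natAbs : ℝ) * N * X := by gcongr
    linarith
  have hXN : X * N ≤ Q := by
    rw [hQ]
    have : 1 * (X * N) ≤ (n.natAbs : ℝ) * (X * N) := by gcongr
    linarith
  have hQ1 : 1 ≤ Q := by nlinarith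
  have hnQ : (n.natAbs : ℝ) ≤ Q := by nlinarith
  set K : ℕ := ⌊X⌋₊ with hK
  have hKX : (K:ℝ) ≤ X := Nat.floor_le (by linarith)
  set S : Set (ℤ × ℤ) := {xy : ℤ × ℤ |
          t₁ * xy.1 ^ 2 + t₂ * xy.1 * xy.2 + t₃ * xy.2 ^ 2 = n ∧
          ((|xy.1| + |xy.2| : ℤ) : ℝ) ≤ X} with hS
  have hSK : ∀ p ∈ S, t₁*p.1^2 + t₂*p.1*p.2 + t₃*p.2^2 = n ∧ p.1.natAbs + p.2.natAbs ≤ K := by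
    rintro p ⟨h1, h2⟩
    refine ⟨h1, Nat.le_floor ?_⟩
    rw [Int.abs_eq_natAbs, Int.abs_eq_natAbs] at h2
    exact_mod_cast h2
  have hfin : S.Finite := by
    apply Set.Finite.subset ((Set.finite_Icc (-(K:ℤ)) K).prod (Set.finite_Icc (-(K:ℤ)) K))
    intro p hp
    have := (hSK p hp).2
    simp only [Set.mem_prod, Set.mem_Icc]
    omega
  rw [Set.ncard_eq_toFinset_card S hfin]
  have hs : ∀ p ∈ hfin.toFinset, t₁*p.1^2 + t₂*p.1*p.2 + t₃*p.2^2 = n ∧ p.1.natAbs + p.2.natAbs ≤ K :=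
    fun p hp => hSK p (hfin.mem_toFinset.mp hp)
  have hpos1 : 0 ≤ 9 * (2 * 108^δ / δ + 1) * (C * 4^δ) * (C * 4^δ) * Q^ε := by positivity
  have hpos2 : 0 ≤ 2 * C * Q^ε := by positivity
  rw [add_mul]
  by_cases h1 : t₁ = 0
  · have h2 : t₂ ≠ 0 := by rintro rfl; simp [h1] at hT
    have hcard := form_card_zero t₂ t₃ n h2 hn hfin.toFinset (by
      intro p hp
      have := (hs p hp).1
      rw [h1] at this
      linarith)
    have hd := hdiv n.natAbs (Int.natAbs_ne_zero.mpr hn)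
    have hq : (n.natAbs : ℝ)^δ ≤ Q^ε := by
      calc (n.natAbs : ℝ)^δ ≤ Q^δ := Real.rpow_le_rpow (by positivity) hnQ hδ0.le
        _ ≤ Q^ε := Real.rpow_le_rpow_of_exponent_le hQ1 (by rw [hδ]; linarith)
    have : (hfin.toFinset.card : ℝ) ≤ 2 * C * Q^ε := by
      calc (hfin.toFinset.card : ℝ) ≤ 2 * (n.natAbs.divisors.card : ℝ) := by exact_mod_cast hcard
        _ ≤ 2 * (C * Q^ε) := by
          gcongr
          exact hd.trans (by gcongr)
        _ = _ := by ring
    linarith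
  · have hcard := form_card t₁ t₂ t₃ n N K (108 * N^4 * K^2) hT h1 hn n1 n2 n3 le_rfl hfin.toFinset hs
    have hm : (4*t₁*n).natAbs ≠ 0 := by simp [h1, hn]
    have hd := hdiv _ hm
    have hmQ : ((4*t₁*n).natAbs : ℝ) ≤ 4 * Q := by
      rw [Int.natAbs_mul, Int.natAbs_mul]
      have : (4:ℤ).natAbs = 4 := rfl
      rw [this]
      push_cast
      have n1r : (t₁.natAbs : ℝ) ≤ N := by exact_mod_cast n1
      have : (t₁.natAbs : ℝ) * n.natAbs ≤ N * n.natAbs := by gcongr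
      push_cast at *
      nlinarith
    have hd2 : ((4*t₁*n).natAbs.divisors.card : ℝ) ≤ C * 4^δ * Q^δ := by
      rw [mul_assoc C, ← Real.mul_rpow (by norm_num) (by positivity)]
      refine hd.trans ?_
      gcongr
    have hlog := log_bound δ hδ0 (108 * N^4 * K^2) Q hQ1 (by
      push_cast
      have hKN : (K:ℝ) * N ≤ Q := (by gcongr : (K:ℝ) * N ≤ X * N).trans hXN
      have hNQ : (N:ℝ) ≤ Q := by
        refine le_trans ?_ hXN
        nlinarith
      calc (108:ℝ) * N^4 * K^2 = 108 * (N^2 * (K*N)^2) := by ring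
        _ ≤ 108 * (Q^2 * Q^2) := by gcongr
        _ = _ := by ring)
    have hexp : Q^ε = Q^(4*δ) * Q^δ * Q^δ := by
      rw [← Real.rpow_add (by linarith), ← Real.rpow_add (by linarith)]
      congr 1
      rw [hδ]; ring
    have : (hfin.toFinset.card : ℝ) ≤ 9 * (2 * 108^δ / δ + 1) * (C * 4^δ) * (C * 4^δ) * Q^ε := by
      calc (hfin.toFinset.card : ℝ) ≤ 9 * ((Nat.log 2 (108 * N^4 * K^2) + 1 : ℕ) : ℝ) * ((4*t₁*n).natAbs.divisors.card : ℝ) * ((4*t₁*n).natAbs.divisors.card : ℝ) := by exact_mod_cast hcard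
        _ ≤ 9 * ((2 * 108^δ / δ + 1) * Q^(4*δ)) * (C * 4^δ * Q^δ) * (C * 4^δ * Q^δ) := by
          gcongr
        _ = _ := by rw [hexp]; ring
    linarith
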